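/- arXiv:0904.1158 — 2 statements merged into one kernel-verified Lean document; each statement's English description precedes it below -/
import Mathlib

section
/- Let D be the cell set of a skew shifted Young diagram with n cells and let T_0 be a standard tableau of shape D with content sequence i_0. Then the map sending a standard tableau T of shape D to its content sequence is a bijection from the set of all standard tableaux of shape D onto the equivalence class {j ∈ ℕ^n : j ∼ i_0} under admissible transpositions. In particular, the number of standard tableaux of shape D equals the cardinality of the equivalence class of i_0. -/
/-- A strict partition: a strictly decreasing list of positive integers. -/
def StrictPartition (l : List ℕ) : Prop :=
  l.Chain' (· > ·) ∧ ∀ x ∈ l, 0 < x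

/-- The shifted Young diagram of a strict partition (0-indexed):
row `r` consists of the cells `(r, j)` with `r ≤ j < r + λ_r`. -/
def shiftedCells (l : List ℕ) : Set (ℕ × ℕ) :=
  {p : ℕ × ℕ | p.1 ≤ p.2 ∧ p.2 < p.1 + l.getD p.1 0}

/-- `D` is the cell set of a skew shifted Young diagram. -/
def IsSkewShifted (D : Set (ℕ × ℕ)) : Prop :=
  ∃ lam mu : List ℕ, StrictPartition lam ∧ StrictPartition mu ∧
    (∀ r, mu.getD r 0 ≤ lam.getD r 0) ∧ D = shiftedCells lam \ shiftedCells mu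

/-- A standard tableau of shape `D` with `n` cells: a bijection from `{1,…,n}`
(i.e. `Fin n`) onto `D` whose labels increase along rows and down columns. -/
def IsStandard {n : ℕ} (D : Set (ℕ × ℕ)) (T : Fin n → ℕ × ℕ) : Prop :=
  Function.Injective T ∧ Set.range T = D ∧
  (∀ k l : Fin n, (T l).1 = (T k).1 → (T l).2 = (T k).2 + 1 → k < l) ∧
  (∀ k l : Fin n, (T l).1 = (T k).1 + 1 → (T l).2 = (T k).2 → k < l)

/-- The content sequence of a tableau: the content `j − r` of the cell labeled `k`. -/
def contentSeq {n : ℕ} (T : Fin n → ℕ × ℕ) : Fin n → ℕ := fun k => (T k).2 - (T k).1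

/-- A tuple `i ∈ ℕ^n` is splittable if whenever `i k = i l` with `k < l`:
if the common value is `0` then `1` occurs strictly between, and if it is `≥ 1`
then both the value minus one and the value plus one occur strictly between. -/
def Splittable {n : ℕ} (i : Fin n → ℕ) : Prop :=
  ∀ k l : Fin n, k < l → i k = i l →
    (i k = 0 → ∃ a, k < a ∧ a < l ∧ i a = 1) ∧
    (1 ≤ i k → (∃ a, k < a ∧ a < l ∧ i a + 1 = i k) ∧ (∃ a, k < a ∧ a < l ∧ i a = i k + 1))

/-- `j` is obtained from `i` by one admissible simple transposition. -/
def AdmissibleSwap {n : ℕ} (i j : Fin n → ℕ) : Prop :=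
  ∃ (k : ℕ) (hk : k + 1 < n),
    i ⟨k, Nat.lt_of_succ_lt hk⟩ ≠ i ⟨k + 1, hk⟩ + 1 ∧
    i ⟨k + 1, hk⟩ ≠ i ⟨k, Nat.lt_of_succ_lt hk⟩ + 1 ∧
    j = i ∘ Equiv.swap ⟨k, Nat.lt_of_succ_lt hk⟩ ⟨k + 1, hk⟩

/-- Equivalence of tuples under finite chains of admissible transpositions. -/
def EquivTuples {n : ℕ} (i j : Fin n → ℕ) : Prop :=
  Relation.ReflTransGen AdmissibleSwap i j

/-!
The cells of a skew shifted shape form an order-convex subset `D` of the half-plane `r ≤ j` in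
`ℕ × ℕ`, and its standard tableaux are the linear extensions of `D`. Two cells of the half-plane
whose contents differ by at most one are comparable. Hence a linear extension can be read off its
content sequence, smallest label first; and in a linear extension two consecutive cells are
comparable exactly when their contents differ by one, because by convexity a comparable consecutive
pair must be a covering pair. Admissible transpositions of the content sequence are therefore the
exchanges of consecutive incomparable cells, and bubble sort connects any two linear extensions by
such exchanges.
-/

/-! ### Linear extensions -/

section LinearExtension

variable {ι α β : Type*} [LinearOrder ι] [Preorder α] {D : Set α} {T T' : ι → α} {i j : ι}

theorem le_or_eq_of_swap_apply_le (hij : i ⋖ j) {a b : ι}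
    (h : Equiv.swap i j a ≤ Equiv.swap i j b) : a ≤ b ∨ a = j ∧ b = i := by
  have hlt := hij.lt
  have hle (c : ι) : c < j → c ≤ i := hij.le_of_lt
  have hge (c : ι) : i < c → j ≤ c := hij.ge_of_gt
  simp only [Equiv.swap_apply_def] at h
  grind

theorem exists_covBy_apply_lt_of_ne_id [Finite ι] {s : ι → ι} (hs : Function.Injective s)
    (hne : s ≠ id) : ∃ i j, i ⋖ j ∧ s j < s i := by
  have := Fintype.ofFinite ι
  classical
  have := Fintype.toLocallyFiniteOrder (α := ι)
  contrapose! hne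
  have hmono : StrictMono s := (strictMono_iff_forall_covBy s).2 fun i j hij =>
    (hne i j hij).lt_of_ne (hs.ne hij.ne)
  exact (hmono.range_inj strictMono_id).1 <| by
    rw [(Finite.surjective_of_injective hs).range_eq, Set.range_id]

/-- `T` lists `D` along `ι` in a way compatible with the order of `D`. The condition is phrased as
reflection of `≤`, so that it includes the injectivity of `T`. -/
structure IsLinearExtension (D : Set α) (T : ι → α) : Prop where
  range_eq : Set.range T = D
  le_of_apply_le : ∀ ⦃i j⦄, T i ≤ T j → i ≤ j

/-- `T'` arises from `T` by exchanging two consecutive entries that are out of order or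
incomparable. When `T` is a linear extension, `T j ≤ T i` is impossible for `i ⋖ j`, so the entries
are then incomparable. -/
def AdjacentExchange (T T' : ι → α) : Prop :=
  ∃ i j, i ⋖ j ∧ ¬ T i ≤ T j ∧ T' = T ∘ Equiv.swap i j

namespace IsLinearExtension

theorem apply_mem (hT : IsLinearExtension D T) (i : ι) : T i ∈ D :=
  hT.range_eq ▸ Set.mem_range_self i

theorem exists_apply_eq (hT : IsLinearExtension D T) {p : α} (hp : p ∈ D) : ∃ i, T i = p := by
  rwa [← Set.mem_range, hT.range_eq]

theorem injective (hT : IsLinearExtension D T) : Function.Injective T := fun _ _ h =>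
  (hT.le_of_apply_le h.le).antisymm (hT.le_of_apply_le h.ge)

theorem eq_of_forall_lt_eq_of_le (hT : IsLinearExtension D T) (hT' : IsLinearExtension D T')
    (hlt : ∀ j < i, T j = T' j) (hle : T i ≤ T' i) : T i = T' i := by
  obtain ⟨j, hj⟩ := hT'.exists_apply_eq (hT.apply_mem i)
  obtain hji | rfl := (hT'.le_of_apply_le (hj ▸ hle)).lt_or_eq
  · exact absurd (hT.injective ((hlt j hji).trans hj)) hji.ne
  · exact hj.symm

theorem eq_of_comp_eq [WellFoundedLT ι] {c : α → β}
    (hc : ∀ p ∈ D, ∀ q ∈ D, c p = c q → p ≤ q ∨ q ≤ p)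
    (hT : IsLinearExtension D T) (hT' : IsLinearExtension D T') (h : c ∘ T = c ∘ T') :
    T = T' := by
  funext i
  induction i using WellFoundedLT.induction with
  | ind i ih =>
    obtain hle | hle := hc _ (hT.apply_mem i) _ (hT'.apply_mem i) (congrFun h i)
    · exact hT.eq_of_forall_lt_eq_of_le hT' ih hle
    · exact (hT'.eq_of_forall_lt_eq_of_le hT (fun j hj => (ih j hj).symm) hle).symm

theorem comp_swap (hT : IsLinearExtension D T) (hij : i ⋖ j) (hle : ¬ T i ≤ T j) :
    IsLinearExtension D (T ∘ Equiv.swap i j) where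
  range_eq := by rw [(Equiv.surjective _).range_comp, hT.range_eq]
  le_of_apply_le a b hab := by
    obtain h | ⟨rfl, rfl⟩ := le_or_eq_of_swap_apply_le hij (hT.le_of_apply_le hab)
    · exact h
    · simp [hle] at hab

theorem of_adjacentExchange (hT : IsLinearExtension D T) (h : AdjacentExchange T T') :
    IsLinearExtension D T' := by
  obtain ⟨i, j, hij, hle, rfl⟩ := h
  exact hT.comp_swap hij hle

theorem reflTransGen_adjacentExchange [Finite ι] (hT : IsLinearExtension D T)
    (hT' : IsLinearExtension D T') : Relation.ReflTransGen AdjacentExchange T T' := by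
  obtain ⟨s, rfl⟩ := Set.range_subset_range_iff_exists_comp.1
    (hT'.range_eq.trans hT.range_eq.symm).le
  -- Each exchange at a descent of `s` lowers `s` in the lexicographic order.
  induction hs : toLex s using WellFoundedLT.induction generalizing s with
  | ind s' ih =>
    subst hs
    obtain rfl | hne := eq_or_ne s id
    · exact .refl
    obtain ⟨i, j, hij, hlt⟩ := exists_covBy_apply_lt_of_ne_id hT'.injective.of_comp hne
    have hle : ¬ T (s i) ≤ T (s j) := fun h => (hT.le_of_apply_le h).not_gt hlt
    have hle' : ¬ T (s j) ≤ T (s i) := fun h => (hT'.le_of_apply_le h).not_gt hij.lt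
    refine .tail (ih _ (Pi.lex_desc hij.le hlt) _ (hT'.comp_swap hij hle) rfl) ⟨i, j, hij, ?_, ?_⟩
    · simpa using hle'
    · ext; simp

end IsLinearExtension

end LinearExtension

/-! ### Contents in the shifted half-plane -/

/-- The content `j − r` of the cell `(r, j)`. The subtraction truncates, so this is the content only
for cells with `r ≤ j`. -/
def cellContent (p : ℕ × ℕ) : ℕ := p.2 - p.1

theorem le_or_le_of_cellContent_le {p q : ℕ × ℕ} (hp : p.1 ≤ p.2) (hq : q.1 ≤ q.2)
    (hpq : cellContent p ≤ cellContent q + 1) (hqp : cellContent q ≤ cellContent p + 1) :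
    p ≤ q ∨ q ≤ p := by
  simp only [cellContent, Prod.le_def] at *
  omega

theorem natProd_covBy_iff {p q : ℕ × ℕ} :
    p ⋖ q ↔ q.1 = p.1 ∧ q.2 = p.2 + 1 ∨ q.1 = p.1 + 1 ∧ q.2 = p.2 := by
  simp only [Prod.covBy_iff, Nat.covBy_iff_add_one_eq]
  omega

theorem cellContent_eq_add_one_or_of_covBy {p q : ℕ × ℕ} (hp : p.1 ≤ p.2) (hq : q.1 ≤ q.2)
    (h : p ⋖ q) : cellContent p = cellContent q + 1 ∨ cellContent q = cellContent p + 1 := by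
  rw [natProd_covBy_iff] at h
  simp only [cellContent]
  omega

/-- `D` is an order-convex set of cells of the half-plane `r ≤ j`. The convexity is
that of the half-plane, weaker than `Set.OrdConnected D` in `ℕ × ℕ`: intermediate cells outside the
half-plane are not required to lie in `D`. -/
structure IsShiftedConvex (D : Set (ℕ × ℕ)) : Prop where
  fst_le_snd : ∀ ⦃p⦄, p ∈ D → p.1 ≤ p.2
  mem_of_le_of_le : ∀ ⦃p q r⦄, p ∈ D → r ∈ D → p ≤ q → q ≤ r → q.1 ≤ q.2 → q ∈ D

namespace IsShiftedConvex

variable {D : Set (ℕ × ℕ)}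

theorem exists_covBy_le_of_lt (hD : IsShiftedConvex D) {p r : ℕ × ℕ} (hp : p ∈ D) (hr : r ∈ D)
    (hpr : p < r) : ∃ q ∈ D, p ⋖ q ∧ q ≤ r := by
  have hle := Prod.le_def.1 hpr.le
  obtain hlt | heq := hle.2.lt_or_eq
  · have hp' := hD.fst_le_snd hp
    have hqr : (p.1, p.2 + 1) ≤ r := ⟨hle.1, hlt⟩
    have hcov : p ⋖ (p.1, p.2 + 1) := natProd_covBy_iff.2 (by simp)
    exact ⟨_, hD.mem_of_le_of_le hp hr hcov.le hqr (hp'.trans (Nat.le_succ _)), hcov, hqr⟩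
  · have hr' := hD.fst_le_snd hr
    have hlt : p.1 < r.1 := hle.1.lt_of_ne fun h => hpr.ne (Prod.ext h heq)
    have hqr : (p.1 + 1, p.2) ≤ r := ⟨hlt, heq.le⟩
    have hcov : p ⋖ (p.1 + 1, p.2) := natProd_covBy_iff.2 (by simp)
    exact ⟨_, hD.mem_of_le_of_le hp hr hcov.le hqr (hlt.trans_le (hr'.trans heq.ge)), hcov, hqr⟩

theorem apply_le_iff_cellContent {ι : Type*} [LinearOrder ι] {T : ι → ℕ × ℕ} {i j : ι}
    (hD : IsShiftedConvex D) (hT : IsLinearExtension D T) (hij : i ⋖ j) :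
    T i ≤ T j ↔ cellContent (T i) = cellContent (T j) + 1 ∨
      cellContent (T j) = cellContent (T i) + 1 := by
  have hi := hD.fst_le_snd (hT.apply_mem i)
  have hj := hD.fst_le_snd (hT.apply_mem j)
  constructor
  · intro hle
    obtain ⟨q, hq, hiq, hqj⟩ := hD.exists_covBy_le_of_lt (hT.apply_mem i) (hT.apply_mem j)
      (hle.lt_of_ne (hT.injective.ne hij.ne))
    obtain ⟨m, rfl⟩ := hT.exists_apply_eq hq
    obtain rfl | rfl := hij.eq_or_eq (hT.le_of_apply_le hiq.le) (hT.le_of_apply_le hqj)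
    · exact absurd rfl hiq.ne
    · exact cellContent_eq_add_one_or_of_covBy hi hj hiq
  · intro h
    exact (le_or_le_of_cellContent_le hi hj (by omega) (by omega)).resolve_right fun hji =>
      (hT.le_of_apply_le hji).not_gt hij.lt

variable {n : ℕ} {T : Fin n → ℕ × ℕ}

theorem isStandard_iff_isLinearExtension (hD : IsShiftedConvex D) :
    IsStandard D T ↔ IsLinearExtension D T := by
  constructor
  · rintro ⟨hinj, hrange, hrow, hcol⟩
    have hmem (k : Fin n) : T k ∈ D := hrange ▸ Set.mem_range_self k
    refine ⟨hrange, fun k l hle => ?_⟩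
    induction k using WellFoundedGT.induction with
    | ind k ih =>
      obtain heq | hlt := hle.eq_or_lt
      · exact (hinj heq).le
      obtain ⟨q, hq, hkq, hql⟩ := hD.exists_covBy_le_of_lt (hmem k) (hmem l) hlt
      obtain ⟨m, rfl⟩ : q ∈ Set.range T := hrange ▸ hq
      have hkm : k < m := (natProd_covBy_iff.1 hkq).elim (fun h => hrow k m h.1 h.2)
        fun h => hcol k m h.1 h.2
      exact hkm.le.trans (ih m hkm hql)
  · intro hT
    have hcov {k l : Fin n} (h : T k ⋖ T l) : k < l :=
      (hT.le_of_apply_le h.le).lt_of_ne fun hkl => h.ne (congrArg T hkl)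
    exact ⟨hT.injective, hT.range_eq, fun k l h₁ h₂ => hcov (natProd_covBy_iff.2 (.inl ⟨h₁, h₂⟩)),
      fun k l h₁ h₂ => hcov (natProd_covBy_iff.2 (.inr ⟨h₁, h₂⟩))⟩

theorem injOn_contentSeq (hD : IsShiftedConvex D) :
    Set.InjOn contentSeq {T : Fin n → ℕ × ℕ | IsLinearExtension D T} := fun _ hT _ hT' =>
  hT.eq_of_comp_eq (c := cellContent) (fun _ hp _ hq h =>
    le_or_le_of_cellContent_le (hD.fst_le_snd hp) (hD.fst_le_snd hq) (by omega) (by omega)) hT'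

end IsShiftedConvex

/-! ### Admissible transpositions -/

theorem admissibleSwap_iff_exists_covBy {n : ℕ} {i j : Fin n → ℕ} :
    AdmissibleSwap i j ↔
      ∃ a b, a ⋖ b ∧ ¬ (i a = i b + 1 ∨ i b = i a + 1) ∧ j = i ∘ Equiv.swap a b := by
  constructor
  · rintro ⟨k, hk, h₁, h₂, rfl⟩
    exact ⟨_, _, by simp, not_or.2 ⟨h₁, h₂⟩, rfl⟩
  · rintro ⟨⟨a, ha⟩, ⟨b, hb⟩, hab, hne, rfl⟩
    obtain rfl : a + 1 = b := by simpa using hab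
    exact ⟨a, hb, (not_or.1 hne).1, (not_or.1 hne).2, rfl⟩

namespace IsShiftedConvex

variable {D : Set (ℕ × ℕ)} {n : ℕ} {T : Fin n → ℕ × ℕ} {j : Fin n → ℕ}

theorem admissibleSwap_contentSeq_iff (hD : IsShiftedConvex D) (hT : IsLinearExtension D T) :
    AdmissibleSwap (contentSeq T) j ↔ ∃ T', AdjacentExchange T T' ∧ contentSeq T' = j := by
  rw [admissibleSwap_iff_exists_covBy]
  constructor
  · rintro ⟨a, b, hab, hne, rfl⟩
    exact ⟨_, ⟨a, b, hab, mt (hD.apply_le_iff_cellContent hT hab).1 hne, rfl⟩, rfl⟩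
  · rintro ⟨_, ⟨a, b, hab, hle, rfl⟩, rfl⟩
    exact ⟨a, b, hab, mt (hD.apply_le_iff_cellContent hT hab).2 hle, rfl⟩

theorem equivTuples_contentSeq_iff (hD : IsShiftedConvex D) (hT : IsLinearExtension D T) :
    EquivTuples (contentSeq T) j ↔ ∃ T', IsLinearExtension D T' ∧ contentSeq T' = j := by
  constructor
  · intro h
    induction h with
    | refl => exact ⟨T, hT, rfl⟩
    | tail _ hswap ih =>
      obtain ⟨T₁, hT₁, rfl⟩ := ih
      obtain ⟨T₂, hexch, rfl⟩ := (hD.admissibleSwap_contentSeq_iff hT₁).1 hswap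
      exact ⟨T₂, hT₁.of_adjacentExchange hexch, rfl⟩
  · rintro ⟨T', hT', rfl⟩
    have hchain := hT.reflTransGen_adjacentExchange hT'
    induction hchain using Relation.ReflTransGen.head_induction_on with
    | refl => exact .refl
    | head hexch _ ih =>
      exact .head ((hD.admissibleSwap_contentSeq_iff hT).2 ⟨_, hexch, rfl⟩)
        (ih (hT.of_adjacentExchange hexch))

end IsShiftedConvex

/-! ### Skew shifted shapes -/

theorem add_getD_le_add_getD {l : List ℕ} (hl : l.IsChain (· > ·)) {r s : ℕ} (hrs : r ≤ s)
    (hs : 0 < l.getD s 0) : s + l.getD s 0 ≤ r + l.getD r 0 := by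
  induction s, hrs using Nat.le_induction with
  | base => rfl
  | succ s _ ih =>
    have hlen : s + 1 < l.length := by
      by_contra! h
      rw [List.getD_eq_default _ _ h] at hs
      exact hs.false
    have hstep : l.getD (s + 1) 0 < l.getD s 0 := by
      rw [List.getD_eq_getElem _ _ hlen, List.getD_eq_getElem _ _ (by omega)]
      exact List.isChain_iff_getElem.1 hl s hlen
    have := ih (by omega)
    omega

theorem mem_shiftedCells_of_le {l : List ℕ} (hl : l.IsChain (· > ·)) {p q : ℕ × ℕ}
    (hq : q ∈ shiftedCells l) (hpq : p ≤ q) (hp : p.1 ≤ p.2) : p ∈ shiftedCells l := by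
  have hq' : q.1 ≤ q.2 ∧ q.2 < q.1 + l.getD q.1 0 := hq
  have hrow := add_getD_le_add_getD hl hpq.1 (by omega)
  exact ⟨hp, (hpq.2.trans_lt hq'.2).trans_le hrow⟩

theorem IsSkewShifted.isShiftedConvex {D : Set (ℕ × ℕ)} (hD : IsSkewShifted D) :
    IsShiftedConvex D := by
  obtain ⟨lam, mu, hlam, hmu, -, rfl⟩ := hD
  exact
    { fst_le_snd := fun _ hp => hp.1.1
      mem_of_le_of_le := fun _ _ _ hp hr hpq hqr hq =>
        ⟨mem_shiftedCells_of_le hlam.1 hr.1 hqr hq,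
          fun hqmu => hp.2 (mem_shiftedCells_of_le hmu.1 hqmu hpq hp.1.1)⟩ }

/-- the content-sequence map is a bijection from the set of
standard tableaux of a fixed skew shifted shape onto the equivalence class
(under admissible transpositions) of the content sequence of any one of them;
in particular the number of standard tableaux equals the cardinality of that
equivalence class. -/
theorem content_seq_bijOn_equiv_class (n : ℕ) (D : Set (ℕ × ℕ))
    (hD : IsSkewShifted D) (T₀ : Fin n → ℕ × ℕ) (hT₀ : IsStandard D T₀) :
    Set.BijOn contentSeq {T : Fin n → ℕ × ℕ | IsStandard D T}
      {j : Fin n → ℕ | EquivTuples (contentSeq T₀) j} ∧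
    Nat.card {T : Fin n → ℕ × ℕ // IsStandard D T} =
      Nat.card {j : Fin n → ℕ // EquivTuples (contentSeq T₀) j} := by
  have hconv := hD.isShiftedConvex
  have hstd : {T : Fin n → ℕ × ℕ | IsStandard D T} = {T | IsLinearExtension D T} :=
    Set.ext fun _ => hconv.isStandard_iff_isLinearExtension
  have hT₀' : IsLinearExtension D T₀ := hconv.isStandard_iff_isLinearExtension.1 hT₀
  have himage : contentSeq '' {T : Fin n → ℕ × ℕ | IsStandard D T} =
      {j | EquivTuples (contentSeq T₀) j} := by
    rw [hstd]
    exact Set.ext fun _ => (hconv.equivTuples_contentSeq_iff hT₀').symm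
  have hinj : Set.InjOn contentSeq {T : Fin n → ℕ × ℕ | IsStandard D T} :=
    hstd ▸ hconv.injOn_contentSeq
  have hbij := himage ▸ hinj.bijOn_image
  exact ⟨hbij, Nat.card_congr hbij.equiv⟩
end

section
/- Let p ≥ 3 be an odd integer and set m = (p−1)/2. The map sending a pair (λ, T), where λ is a strict partition of n with largest part λ_1 ≤ (p+1)/2 and T is a standard tableau of shape the shifted Young diagram S(λ), to the content sequence of T, is a bijection onto the set of tuples i ∈ {0,1,…,m}^n that are splittable, satisfy i_1 = 0, and satisfy for each 2 ≤ k ≤ n that either i_k + 1 ∈ {i_1,…,i_{k−1}} or (i_k ≥ 1 and i_k − 1 ∈ {i_1,…,i_{k−1}}). -/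
/-!
The content sequence determines the tableau: cells of equal content lie on one diagonal, a
standard tableau fills each diagonal from top to bottom, so the label `k` sits in the row whose
index is the number of earlier labels with the same content. This formula also defines the
candidate preimage of a tuple `i`. After each prefix of `i`, the number of occurrences of `c` is
the length of the diagonal of content `c`, and the cells filled so far form a shifted diagram
exactly when consecutive diagonal lengths satisfy `f (c + 1) ≤ f c ≤ f (c + 1) + 1`. If the value
`c` has occurred before, splittability supplies the neighbors `c ± 1` since its last occurrence, so
that adding one more cell keeps these inequalities; if not, the neighbor condition does.
-/

section Shape

variable {l l' : List ℕ} {r s j j' : ℕ}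

namespace StrictPartition

lemma lt_length_iff (hl : StrictPartition l) : r < l.length ↔ 0 < l.getD r 0 := by
  refine ⟨fun hr => ?_, fun hr => ?_⟩
  · rw [List.getD_eq_getElem _ _ hr]
    exact hl.2 _ (List.getElem_mem hr)
  · by_contra! hlen
    exact hr.ne' (List.getD_eq_default _ _ hlen)

lemma getD_succ_lt (hl : StrictPartition l) (hr : 0 < l.getD (r + 1) 0) :
    l.getD (r + 1) 0 < l.getD r 0 := by
  have hlen : r + 1 < l.length := hl.lt_length_iff.mpr hr
  rw [List.getD_eq_getElem _ _ hlen, List.getD_eq_getElem _ _ (Nat.lt_of_succ_lt hlen)]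
  exact List.isChain_iff_getElem.mp hl.1 r hlen

lemma add_getD_le_add_getD (hl : StrictPartition l) (hrs : r ≤ s) (hs : 0 < l.getD s 0) :
    s + l.getD s 0 ≤ r + l.getD r 0 := by
  induction s, hrs using Nat.le_induction with
  | base => exact le_rfl
  | succ s _ ih =>
    have hlt := hl.getD_succ_lt hs
    have := ih (by omega)
    omega

lemma mem_shiftedCells_of_le (hl : StrictPartition l) (hs : (s, j') ∈ shiftedCells l)
    (hrs : r ≤ s) (hrj : r ≤ j) (hj : j ≤ j') : (r, j) ∈ shiftedCells l := by
  obtain ⟨hle, hlt⟩ : s ≤ j' ∧ j' < s + l.getD s 0 := hs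
  have hend := hl.add_getD_le_add_getD hrs (by omega)
  exact ⟨hrj, show j < r + l.getD r 0 by omega⟩

lemma eq_of_getD_eq (hl : StrictPartition l) (hl' : StrictPartition l')
    (h : ∀ r, l.getD r 0 = l'.getD r 0) : l = l' := by
  have hlen : l.length = l'.length :=
    eq_of_forall_lt_iff fun r => by rw [hl.lt_length_iff, hl'.lt_length_iff, h]
  refine List.ext_getElem hlen fun r hr hr' => ?_
  rw [← List.getD_eq_getElem _ 0 hr, ← List.getD_eq_getElem _ 0 hr', h]

end StrictPartition

lemma mk_add_mem_shiftedCells_iff {c : ℕ} : (r, r + c) ∈ shiftedCells l ↔ c < l.getD r 0 :=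
  ⟨fun h => Nat.lt_of_add_lt_add_left h.2,
    fun h => ⟨Nat.le_add_right r c, Nat.add_lt_add_left h r⟩⟩

lemma injOn_shiftedCells : Set.InjOn shiftedCells {l | StrictPartition l} :=
  fun l hl l' hl' h => hl.eq_of_getD_eq hl' fun r => eq_of_forall_lt_iff fun c => by
    rw [← mk_add_mem_shiftedCells_iff, ← mk_add_mem_shiftedCells_iff, h]

lemma ncard_shiftedCells (l : List ℕ) : (shiftedCells l).ncard = l.sum := by
  let cell : (Σ r : Fin l.length, Fin l[r]) → ℕ × ℕ := fun q => (q.1, q.1 + q.2)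
  have hinj : Function.Injective cell := by
    rintro ⟨r, c⟩ ⟨r', c'⟩ h
    obtain ⟨hr, hc⟩ := Prod.mk.inj h
    obtain rfl := Fin.ext hr
    obtain rfl := Fin.ext (Nat.add_left_cancel hc)
    rfl
  have hrange : Set.range cell = shiftedCells l := by
    ext ⟨r, j⟩
    constructor
    · rintro ⟨q, hq⟩
      rw [← hq]
      exact mk_add_mem_shiftedCells_iff.mpr (by simp)
    · intro h
      obtain ⟨c, rfl⟩ : ∃ c, j = r + c := Nat.exists_eq_add_of_le h.1
      rw [mk_add_mem_shiftedCells_iff] at h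
      have hr : r < l.length := by
        by_contra! hlen
        rw [List.getD_eq_default _ _ hlen] at h
        exact Nat.not_lt_zero c h
      rw [List.getD_eq_getElem _ _ hr] at h
      exact ⟨⟨⟨r, hr⟩, ⟨c, h⟩⟩, rfl⟩
  rw [← hrange, Set.ncard_range_of_injective hinj, Nat.card_sigma]
  simp

end Shape

section Diagonals

variable {f : ℕ → ℕ} {c r : ℕ}

/-- `f` is the sequence of diagonal lengths (indexed by content) of a shifted Young diagram, up to
finiteness: each diagonal is as long as the next one or longer by one cell. -/
def Interlacing (f : ℕ → ℕ) : Prop :=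
  ∀ c, f (c + 1) ≤ f c ∧ f c ≤ f (c + 1) + 1

/-- A cell of content `c` can be added to the shifted diagram with diagonal lengths `f`. For `c = 0`
the second condition is void. -/
def Addable (f : ℕ → ℕ) (c : ℕ) : Prop :=
  f c ≤ f (c + 1) ∧ ∀ d, d + 1 = c → f c < f d

/-- The partition whose `r`-th part is the number of `c` with `r < f c`, for antitone `f` vanishing
somewhere: the partition of a shifted diagram with diagonal lengths `f`. -/
noncomputable def conjugateParts (f : ℕ → ℕ) : List ℕ :=
  (List.range (f 0)).map fun r => sInf {c | f c ≤ r}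

lemma Interlacing.update (hf : Interlacing f) (hc : Addable f c) :
    Interlacing (Function.update f c (f c + 1)) := by
  intro d
  obtain ⟨hd, hd'⟩ := hf d
  obtain ⟨hnext, hprev⟩ := hc
  simp only [Function.update_apply]
  split_ifs with h₁ h₂ h₂
  · omega
  · have := hprev d h₁
    subst h₁
    omega
  · subst h₂
    omega
  · exact ⟨hd, hd'⟩

lemma Interlacing.antitone (hf : Interlacing f) : Antitone f :=
  antitone_nat_of_succ_le fun c => (hf c).1

lemma lt_sInf_le_iff (hf : Antitone f) (h₀ : ∃ c, f c = 0) :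
    c < sInf {c | f c ≤ r} ↔ r < f c := by
  refine ⟨fun h => not_le.mp (Nat.notMem_of_lt_sInf (s := {c | f c ≤ r}) h), fun h => ?_⟩
  obtain ⟨c₀, hc₀⟩ := h₀
  have hmem : f (sInf {c | f c ≤ r}) ≤ r :=
    Nat.sInf_mem (s := {c | f c ≤ r}) ⟨c₀, hc₀.trans_le (Nat.zero_le r)⟩
  by_contra! hle
  exact absurd ((hf hle).trans hmem) (not_le.mpr h)

lemma lt_getD_conjugateParts_iff (hf : Antitone f) (h₀ : ∃ c, f c = 0) :
    c < (conjugateParts f).getD r 0 ↔ r < f c := by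
  by_cases hr : r < f 0
  · rw [List.getD_eq_getElem _ _ (by simpa [conjugateParts] using hr)]
    simpa [conjugateParts] using lt_sInf_le_iff hf h₀
  · rw [List.getD_eq_default _ _ (by simpa [conjugateParts] using hr)]
    have := hf (Nat.zero_le c)
    omega

lemma Interlacing.strictPartition_conjugateParts (hf : Interlacing f) (h₀ : ∃ c, f c = 0) :
    StrictPartition (conjugateParts f) := by
  have hrow (r c : ℕ) : c < sInf {c | f c ≤ r} ↔ r < f c := lt_sInf_le_iff hf.antitone h₀
  have hpos (r : ℕ) (hr : r < f 0) : 0 < sInf {c | f c ≤ r} := (hrow r 0).mpr hr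
  refine ⟨List.isChain_iff_getElem.mpr fun r hr => ?_, fun x hx => ?_⟩
  · simp only [conjugateParts, List.length_map, List.length_range] at hr
    simp only [conjugateParts, List.getElem_map, List.getElem_range]
    obtain ⟨x, hx⟩ := Nat.exists_eq_succ_of_ne_zero (hpos (r + 1) hr).ne'
    have hlast : r + 1 < f x := (hrow (r + 1) x).mp (by omega)
    have hnext : f x ≤ f (x + 1) + 1 := (hf x).2
    rw [hx]
    exact (hrow r (x + 1)).mpr (by omega)
  · obtain ⟨r, hr, rfl⟩ := List.mem_map.mp hx
    exact hpos r (List.mem_range.mp hr)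

end Diagonals

section Tableau

variable {n : ℕ} {l : List ℕ} {T : Fin n → ℕ × ℕ} {k a : Fin n} {r j : ℕ}

namespace IsStandard

lemma sum_eq (hT : IsStandard (shiftedCells l) T) : l.sum = n := by
  rw [← ncard_shiftedCells, ← hT.2.1, Set.ncard_range_of_injective hT.1, Nat.card_fin]

lemma apply_mem (hT : IsStandard (shiftedCells l) T) (k : Fin n) : T k ∈ shiftedCells l :=
  hT.2.1 ▸ Set.mem_range_self k

lemma snd_eq (hT : IsStandard (shiftedCells l) T) (k : Fin n) :
    (T k).2 = (T k).1 + contentSeq T k :=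
  (Nat.add_sub_cancel' (hT.apply_mem k).1).symm

lemma exists_apply_eq_of_le (hl : StrictPartition l) (hT : IsStandard (shiftedCells l) T)
    (hr : r ≤ (T k).1) (hj : j ≤ (T k).2) (hrj : r ≤ j) : ∃ b, T b = (r, j) :=
  hT.2.1.ge (hl.mem_shiftedCells_of_le (hT.apply_mem k) hr hrj hj)

lemma le_of_apply_le (hl : StrictPartition l) (hT : IsStandard (shiftedCells l) T)
    (h : T k ≤ T a) : k ≤ a := by
  induction a using WellFoundedLT.induction with
  | _ a ih =>
    have hk := (hT.apply_mem k).1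
    have ha := (hT.apply_mem a).1
    obtain ⟨hrow, hcol⟩ := h
    rcases hrow.lt_or_eq with hlt | hrow_eq
    · obtain ⟨b, hb⟩ := hT.exists_apply_eq_of_le hl (k := a) (r := (T a).1 - 1) (j := (T a).2)
        (by omega) le_rfl (by omega)
      have hba : b < a := hT.2.2.2 b a (by rw [hb, Nat.sub_add_cancel (by omega)]) (by rw [hb])
      exact (ih b hba (hb ▸ ⟨Nat.le_sub_one_of_lt hlt, hcol⟩)).trans hba.le
    rcases hcol.lt_or_eq with hlt | hcol_eq
    · obtain ⟨b, hb⟩ := hT.exists_apply_eq_of_le hl (k := a) (r := (T a).1) (j := (T a).2 - 1)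
        le_rfl (by omega) (by omega)
      have hba : b < a := hT.2.2.1 b a (by rw [hb]) (by rw [hb, Nat.sub_add_cancel (by omega)])
      exact (ih b hba (hb ▸ ⟨hrow, Nat.le_sub_one_of_lt hlt⟩)).trans hba.le
    · exact (hT.1 (Prod.ext hrow_eq hcol_eq)).le

lemma lt_of_apply_lt (hl : StrictPartition l) (hT : IsStandard (shiftedCells l) T)
    (h : T k < T a) : k < a :=
  (hT.le_of_apply_le hl h.le).lt_of_ne fun hka => h.ne (congrArg T hka)

lemma exists_lt_apply_eq (hl : StrictPartition l) (hT : IsStandard (shiftedCells l) T)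
    (hr : r ≤ (T k).1) (hj : j ≤ (T k).2) (hlt : r < (T k).1 ∨ j < (T k).2) (hrj : r ≤ j) :
    ∃ b < k, T b = (r, j) := by
  obtain ⟨b, hb⟩ := hT.exists_apply_eq_of_le hl hr hj hrj
  refine ⟨b, hT.lt_of_apply_lt hl ?_, hb⟩
  rw [hb]
  exact Prod.lt_iff.mpr (hlt.imp (⟨·, hj⟩) (⟨hr, ·⟩))

lemma fst_lt_fst_iff (hl : StrictPartition l) (hT : IsStandard (shiftedCells l) T)
    (hc : contentSeq T k = contentSeq T a) : (T k).1 < (T a).1 ↔ k < a := by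
  have hk := hT.snd_eq k
  have ha := hT.snd_eq a
  refine ⟨fun h => hT.lt_of_apply_lt hl (Prod.lt_iff.mpr (Or.inl ⟨h, by omega⟩)), fun h => ?_⟩
  by_contra! hle
  exact absurd (hT.le_of_apply_le hl ⟨hle, by omega⟩) (not_le.mpr h)

lemma splittable_contentSeq (hl : StrictPartition l) (hT : IsStandard (shiftedCells l) T) :
    Splittable (contentSeq T) := by
  intro k a hka hc
  have hrow := (hT.fst_lt_fst_iff hl hc).mpr hka
  have hk := hT.snd_eq k
  have ha := hT.snd_eq a
  have between (r j : ℕ) (hrj : r ≤ j) (hkq : T k < (r, j)) (hr : r ≤ (T a).1) (hj : j ≤ (T a).2)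
      (hqa : r < (T a).1 ∨ j < (T a).2) : ∃ b, k < b ∧ b < a ∧ contentSeq T b = j - r := by
    obtain ⟨b, hba, hb⟩ := hT.exists_lt_apply_eq hl hr hj hqa hrj
    exact ⟨b, hT.lt_of_apply_lt hl (hb ▸ hkq), hba, by rw [contentSeq, hb]⟩
  obtain ⟨b, hkb, hba, hb⟩ := between (T k).1 ((T k).2 + 1) (by omega)
    (Prod.lt_iff.mpr (Or.inr ⟨le_rfl, Nat.lt_succ_self _⟩)) hrow.le (by omega) (Or.inl hrow)
  refine ⟨fun _ => ⟨b, hkb, hba, by omega⟩, fun hpos => ⟨?_, b, hkb, hba, by omega⟩⟩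
  obtain ⟨d, hkd, hda, hd⟩ := between ((T k).1 + 1) (T k).2 (by omega)
    (Prod.lt_iff.mpr (Or.inl ⟨Nat.lt_succ_self _, le_rfl⟩)) hrow (by omega) (Or.inr (by omega))
  exact ⟨d, hkd, hda, by omega⟩

lemma contentSeq_le_iff (hl : StrictPartition l) (hT : IsStandard (shiftedCells l) T) (m : ℕ∞) :
    (∀ k, (contentSeq T k : ℕ∞) ≤ m) ↔ (l.getD 0 0 : ℕ∞) ≤ m + 1 := by
  induction m using ENat.recTopCoe with
  | top => simp
  | coe m =>
    norm_cast
    refine ⟨fun h => ?_, fun h k => ?_⟩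
    · by_contra! hlt
      obtain ⟨k, hk⟩ : ∃ k, T k = (0, 0 + (m + 1)) :=
        hT.2.1.ge (mk_add_mem_shiftedCells_iff.mpr hlt)
      have := h k
      simp only [contentSeq, hk] at this
      omega
    · have hmem : (0, 0 + contentSeq T k) ∈ shiftedCells l :=
        hl.mem_shiftedCells_of_le (hT.apply_mem k) (Nat.zero_le _) (Nat.zero_le _)
          (by have := hT.snd_eq k; omega)
      have := mk_add_mem_shiftedCells_iff.mp hmem
      omega

end IsStandard

/-- The first entry of `i` is `0` and every later entry has an entry of value one more or one less
before it. -/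
def NeighborConnected (i : Fin n → ℕ) : Prop :=
  (∀ k : Fin n, k.val = 0 → i k = 0) ∧
    ∀ k : Fin n, 1 ≤ k.val →
      (∃ a, a < k ∧ i a = i k + 1) ∨ (1 ≤ i k ∧ ∃ a, a < k ∧ i a + 1 = i k)

lemma IsStandard.neighborConnected_contentSeq (hl : StrictPartition l)
    (hT : IsStandard (shiftedCells l) T) : NeighborConnected (contentSeq T) := by
  have left (k : Fin n) (hpos : 1 ≤ contentSeq T k) :
      ∃ a, a < k ∧ contentSeq T a + 1 = contentSeq T k := by
    have hk := hT.snd_eq k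
    obtain ⟨a, hak, ha⟩ := hT.exists_lt_apply_eq hl (k := k) (r := (T k).1) (j := (T k).2 - 1)
      le_rfl (by omega) (by omega) (by omega)
    have hc : contentSeq T a = (T k).2 - 1 - (T k).1 := by rw [contentSeq, ha]
    exact ⟨a, hak, by omega⟩
  refine ⟨fun k hk => ?_, fun k hk => ?_⟩
  · by_contra h
    obtain ⟨a, hak, -⟩ := left k (Nat.one_le_iff_ne_zero.mpr h)
    exact Nat.not_lt_zero a (hk ▸ hak)
  rcases Nat.eq_zero_or_pos (contentSeq T k) with hzero | hpos
  · have hdiag := hT.snd_eq k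
    have hrow : (T k).1 ≠ 0 := fun hrow => by
      have hfirst : k ≤ ⟨0, by omega⟩ :=
        hT.le_of_apply_le hl ⟨hrow.trans_le (Nat.zero_le _), by
          simp only [hdiag, hrow, hzero]; exact Nat.zero_le _⟩
      exact absurd (Fin.le_def.mp hfirst) (not_le.mpr hk)
    obtain ⟨a, hak, ha⟩ := hT.exists_lt_apply_eq hl (k := k) (r := (T k).1 - 1) (j := (T k).2)
      (by omega) le_rfl (by omega) (by omega)
    have hc : contentSeq T a = (T k).2 - ((T k).1 - 1) := by rw [contentSeq, ha]
    exact Or.inl ⟨a, hak, by omega⟩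
  · exact Or.inr ⟨hpos, left k hpos⟩

end Tableau

section Counting

variable {n : ℕ} {i : Fin n → ℕ} {c r s t : ℕ} {a k : Fin n}

/-- The number of occurrences of `c` among the first `t` entries of `i`, i.e. the length of the
diagonal of content `c` once the labels below `t` are placed. Taking `t : ℕ` rather than `t : Fin n`
includes the full count `t = n`. -/
def countBefore (i : Fin n → ℕ) (c t : ℕ) : ℕ :=
  (Finset.univ.filter fun a : Fin n => a.val < t ∧ i a = c).card

@[simp]
lemma countBefore_zero (i : Fin n → ℕ) (c : ℕ) : countBefore i c 0 = 0 := by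
  simp [countBefore]

lemma countBefore_mono (i : Fin n → ℕ) (c : ℕ) : Monotone (countBefore i c) :=
  fun _ _ hst => Finset.card_le_card <|
    Finset.monotone_filter_right _ fun _ _ h => ⟨h.1.trans_le hst, h.2⟩

lemma countBefore_lt_countBefore_iff :
    countBefore i c s < countBefore i c t ↔ ∃ a : Fin n, s ≤ a.val ∧ a.val < t ∧ i a = c := by
  refine ⟨fun h => ?_, fun ⟨a, hsa, hat, hc⟩ => ?_⟩
  · obtain ⟨a, ha, ha'⟩ := Finset.exists_mem_notMem_of_card_lt_card h
    simp only [Finset.mem_filter, Finset.mem_univ, true_and] at ha ha'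
    exact ⟨a, not_lt.mp fun hlt => ha' ⟨hlt, ha.2⟩, ha⟩
  · refine Finset.card_lt_card (Finset.ssubset_iff_of_subset ?_ |>.mpr ⟨a, ?_, ?_⟩)
    · exact Finset.monotone_filter_right _ fun _ _ h => ⟨h.1.trans_le (hsa.trans hat.le), h.2⟩
    · simp [hat, hc]
    · simp [hsa]

lemma countBefore_succ_self (k : Fin n) :
    countBefore i (i k) (k + 1) = countBefore i (i k) k + 1 := by
  rw [countBefore, countBefore, ← Finset.card_insert_of_notMem (a := k) (by simp)]
  congr 1
  ext a
  simp only [Finset.mem_filter, Finset.mem_univ, true_and, Finset.mem_insert, Fin.ext_iff]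
  grind

lemma countBefore_succ_of_ne (h : i k ≠ c) : countBefore i c (k + 1) = countBefore i c k := by
  unfold countBefore
  congr 1
  ext a
  simp only [Finset.mem_filter, Finset.mem_univ, true_and]
  grind

lemma countBefore_succ_eq_update (k : Fin n) :
    (countBefore i · (k + 1)) =
      Function.update (countBefore i · k) (i k) (countBefore i (i k) k + 1) := by
  funext c
  rcases eq_or_ne (i k) c with rfl | h
  · rw [Function.update_self, countBefore_succ_self]
  · rw [Function.update_of_ne h.symm, countBefore_succ_of_ne h]

lemma exists_countBefore_eq (h : r < countBefore i c t) :
    ∃ k : Fin n, k.val < t ∧ i k = c ∧ countBefore i c k = r := by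
  induction t with
  | zero => simp at h
  | succ t ih =>
    by_cases hr : r < countBefore i c t
    · obtain ⟨k, hk, hkr⟩ := ih hr
      exact ⟨k, hk.trans (Nat.lt_succ_self t), hkr⟩
    · obtain ⟨k, htk, hkt, rfl⟩ :=
        countBefore_lt_countBefore_iff.mp ((not_lt.mp hr).trans_lt h)
      obtain rfl : t = k := by omega
      rw [countBefore_succ_self] at h
      exact ⟨k, hkt, rfl, by omega⟩

lemma exists_countBefore_eq_zero (i : Fin n → ℕ) (t : ℕ) : ∃ c, countBefore i c t = 0 := by
  obtain ⟨c, hc⟩ := Infinite.exists_notMem_finset (Finset.univ.image i)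
  simp only [Finset.mem_image, Finset.mem_univ, true_and, not_exists] at hc
  exact ⟨c, by simp [countBefore, hc]⟩

lemma IsStandard.countBefore_contentSeq {l : List ℕ} {T : Fin n → ℕ × ℕ}
    (hl : StrictPartition l) (hT : IsStandard (shiftedCells l) T) (k : Fin n) :
    countBefore (contentSeq T) (contentSeq T k) k = (T k).1 := by
  rw [countBefore, ← Finset.card_range (T k).1]
  refine Finset.card_nbij (fun a => (T a).1) (fun a ha => ?_) (fun a ha b hb hab => ?_)
    (fun r hr => ?_)
  · obtain ⟨hak, hc⟩ := (Finset.mem_filter.mp ha).2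
    exact Finset.mem_range.mpr ((hT.fst_lt_fst_iff hl hc).mpr hak)
  · have hca := (Finset.mem_filter.mp ha).2.2
    have hcb := (Finset.mem_filter.mp hb).2.2
    have hcol : (T a).2 = (T b).2 := by
      rw [hT.snd_eq a, hT.snd_eq b, hca, hcb, show (T a).1 = (T b).1 from hab]
    exact hT.1 (Prod.ext hab hcol)
  · have hrow : r < (T k).1 := Finset.mem_range.mp hr
    obtain ⟨a, hak, ha⟩ := hT.exists_lt_apply_eq hl (k := k) (j := r + contentSeq T k)
      hrow.le (by have := hT.snd_eq k; omega) (Or.inl hrow) (Nat.le_add_right _ _)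
    have hc : contentSeq T a = contentSeq T k := by simp [contentSeq, ha]
    exact ⟨a, Finset.mem_filter.mpr ⟨Finset.mem_univ a, hak, hc⟩, congrArg Prod.fst ha⟩

lemma Splittable.exists_succ_between (hs : Splittable i) (hak : a < k) (h : i a = i k) :
    ∃ b, a < b ∧ b < k ∧ i b = i k + 1 := by
  rcases Nat.eq_zero_or_pos (i a) with hzero | hpos
  · obtain ⟨b, hab, hbk, hb⟩ := (hs a k hak h).1 hzero
    exact ⟨b, hab, hbk, by omega⟩
  · rw [← h]
    exact ((hs a k hak h).2 hpos).2

lemma Splittable.addable_of_previous (hs : Splittable i) (hak : a < k) (ha : i a = i k)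
    (hlast : countBefore i (i k) (a + 1) = countBefore i (i k) k)
    (hI : Interlacing (countBefore i · (a + 1))) : Addable (countBefore i · k) (i k) := by
  have grows {c : ℕ} (h : ∃ b, a < b ∧ b < k ∧ i b = c) :
      countBefore i c (a + 1) < countBefore i c k := countBefore_lt_countBefore_iff.mpr h
  refine ⟨?_, fun d hd => ?_⟩
  · have hnext := grows (hs.exists_succ_between hak ha)
    have := (hI (i k)).2
    simp only at this ⊢
    omega
  · obtain ⟨b, hab, hbk, hb⟩ := ((hs a k hak ha).2 (by omega)).1
    have hprev := grows ⟨b, hab, hbk, show i b = d by omega⟩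
    have := (hI d).1
    simp only [hd] at this ⊢
    omega

lemma NeighborConnected.addable_of_first (hi : NeighborConnected i)
    (hfirst : countBefore i (i k) k = 0) (hI : Interlacing (countBefore i · k)) :
    Addable (countBefore i · k) (i k) := by
  refine ⟨by simp [hfirst], fun d hd => ?_⟩
  have occurs {c : ℕ} (h : ∃ a, a < k ∧ i a = c) : 0 < countBefore i c k := by
    obtain ⟨a, hak, ha⟩ := h
    exact countBefore_zero i c ▸
      countBefore_lt_countBefore_iff.mpr ⟨a, Nat.zero_le _, hak, ha⟩
  have hk : 1 ≤ k.val := Nat.one_le_iff_ne_zero.mpr fun hk => by have := hi.1 k hk; omega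
  simp only [hfirst]
  rcases hi.2 k hk with hnext | ⟨-, a, hak, ha⟩
  · have hle : countBefore i (i k + 1) k ≤ countBefore i (i k) k := (hI (i k)).1
    have := occurs hnext
    omega
  · exact occurs ⟨a, hak, by omega⟩

lemma addable_of_interlacing (hs : Splittable i) (hi : NeighborConnected i)
    (hI : ∀ t ≤ k.val, Interlacing (countBefore i · t)) : Addable (countBefore i · k) (i k) := by
  rcases hcount : countBefore i (i k) k with _ | r
  · exact hi.addable_of_first hcount (hI k le_rfl)
  · obtain ⟨a, hak, ha, rfl⟩ := exists_countBefore_eq (r.lt_succ_self.trans_eq hcount.symm)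
    refine hs.addable_of_previous hak ha ?_ (hI (a + 1) hak)
    rw [hcount, ← ha, countBefore_succ_self]

lemma interlacing_countBefore (hs : Splittable i) (hi : NeighborConnected i) (ht : t ≤ n) :
    Interlacing (countBefore i · t) := by
  induction t using Nat.strong_induction_on with
  | _ t ih =>
    rcases t with _ | t
    · simp [Interlacing]
    · rw [countBefore_succ_eq_update ⟨t, ht⟩]
      exact (ih t t.lt_succ_self (by omega)).update <|
        addable_of_interlacing hs hi fun s hst =>
          ih s (Nat.lt_succ_of_le hst) (hst.trans (Nat.le_of_succ_le ht))

lemma addable_countBefore (hs : Splittable i) (hi : NeighborConnected i) (k : Fin n) :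
    Addable (countBefore i · k) (i k) :=
  addable_of_interlacing hs hi fun _ ht => interlacing_countBefore hs hi (ht.trans k.2.le)

end Counting

section Reconstruction

variable {n : ℕ} {i : Fin n → ℕ}

/-- The strict partition whose shifted diagram has diagonals as long as the number of occurrences of
their content in `i`. -/
noncomputable def tupleShape (i : Fin n → ℕ) : List ℕ :=
  conjugateParts (countBefore i · n)

/-- The tableau with content sequence `i` that fills each diagonal from top to bottom. -/
def tupleTableau (i : Fin n → ℕ) (k : Fin n) : ℕ × ℕ :=
  (countBefore i (i k) k, countBefore i (i k) k + i k)

@[simp]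
lemma contentSeq_tupleTableau (i : Fin n → ℕ) : contentSeq (tupleTableau i) = i :=
  funext fun _ => Nat.add_sub_cancel_left ..

lemma injective_tupleTableau (i : Fin n → ℕ) : Function.Injective (tupleTableau i) := by
  intro k a h
  obtain ⟨hrow, hcol⟩ := Prod.mk.inj h
  have hc : i k = i a := by omega
  rw [hc] at hrow
  have le_of_count_eq {b d : Fin n} (hd : i d = i a)
      (h : countBefore i (i a) d = countBefore i (i a) b) : b ≤ d := not_lt.mp fun hdb =>
    h.not_lt (countBefore_lt_countBefore_iff.mpr ⟨d, le_rfl, hdb, hd⟩)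
  exact le_antisymm (le_of_count_eq rfl hrow.symm) (le_of_count_eq hc hrow)

lemma range_tupleTableau (hI : Interlacing (countBefore i · n)) :
    Set.range (tupleTableau i) = shiftedCells (tupleShape i) := by
  have hmem (r c : ℕ) : (r, r + c) ∈ shiftedCells (tupleShape i) ↔ r < countBefore i c n :=
    mk_add_mem_shiftedCells_iff.trans
      (lt_getD_conjugateParts_iff hI.antitone (exists_countBefore_eq_zero i n))
  ext ⟨r, j⟩
  constructor
  · rintro ⟨k, hk⟩
    rw [← hk, tupleTableau, hmem]
    exact countBefore_lt_countBefore_iff.mpr ⟨k, le_rfl, k.2, rfl⟩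
  · intro h
    obtain ⟨c, rfl⟩ : ∃ c, j = r + c := Nat.exists_eq_add_of_le h.1
    obtain ⟨k, -, rfl, rfl⟩ := exists_countBefore_eq ((hmem r c).mp h)
    exact ⟨k, rfl⟩

lemma isStandard_tupleTableau (hs : Splittable i) (hi : NeighborConnected i) :
    IsStandard (shiftedCells (tupleShape i)) (tupleTableau i) := by
  have lt_of_count_lt {k a : Fin n} {c : ℕ} (h : countBefore i c k < countBefore i c a) :
      k < a := (countBefore_mono i c).reflect_lt h
  refine ⟨injective_tupleTableau i, range_tupleTableau (interlacing_countBefore hs hi le_rfl),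
    fun k a hrow hcol => ?_, fun k a hrow hcol => ?_⟩
  · simp only [tupleTableau] at hrow hcol
    have hadd : countBefore i (i a) a < countBefore i (i k) a :=
      (addable_countBefore hs hi a).2 (i k) (by omega)
    exact lt_of_count_lt (c := i k) (by omega)
  · simp only [tupleTableau] at hrow hcol
    have hadd : countBefore i (i a) a ≤ countBefore i (i a + 1) a :=
      (addable_countBefore hs hi a).1
    rw [show i a + 1 = i k by omega] at hadd
    exact lt_of_count_lt (c := i k) (by omega)

lemma strictPartition_tupleShape (hs : Splittable i) (hi : NeighborConnected i) :
    StrictPartition (tupleShape i) :=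
  (interlacing_countBefore hs hi le_rfl).strictPartition_conjugateParts
    (exists_countBefore_eq_zero i n)

variable {l : List ℕ} {T : Fin n → ℕ × ℕ}

lemma IsStandard.tupleTableau_contentSeq (hl : StrictPartition l)
    (hT : IsStandard (shiftedCells l) T) : tupleTableau (contentSeq T) = T := by
  funext k
  rw [tupleTableau, hT.countBefore_contentSeq hl, ← hT.snd_eq]

lemma IsStandard.tupleShape_contentSeq (hl : StrictPartition l)
    (hT : IsStandard (shiftedCells l) T) : tupleShape (contentSeq T) = l := by
  have hs := hT.splittable_contentSeq hl
  have hi := hT.neighborConnected_contentSeq hl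
  refine injOn_shiftedCells (strictPartition_tupleShape hs hi) hl ?_
  rw [← (isStandard_tupleTableau hs hi).2.1, hT.tupleTableau_contentSeq hl, hT.2.1]

end Reconstruction

theorem shifted_tableau_content_bijection_mod_p_general (n : ℕ) (m : ℕ∞) :
    Set.BijOn (fun q : List ℕ × (Fin n → ℕ × ℕ) => contentSeq q.2)
      {q | StrictPartition q.1 ∧ q.1.sum = n ∧ (q.1.getD 0 0 : ℕ∞) ≤ m + 1 ∧
        IsStandard (shiftedCells q.1) q.2}
      {i | (∀ k, (i k : ℕ∞) ≤ m) ∧ Splittable i ∧ NeighborConnected i} := by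
  refine Set.InvOn.bijOn (f' := fun i => (tupleShape i, tupleTableau i)) ⟨?_, ?_⟩ ?_ ?_
  · rintro ⟨l, T⟩ ⟨hl, -, -, hT⟩
    exact Prod.ext (hT.tupleShape_contentSeq hl) (hT.tupleTableau_contentSeq hl)
  · exact fun i _ => contentSeq_tupleTableau i
  · rintro ⟨l, T⟩ ⟨hl, -, hle, hT⟩
    exact ⟨(hT.contentSeq_le_iff hl m).mpr hle, hT.splittable_contentSeq hl,
      hT.neighborConnected_contentSeq hl⟩
  · rintro i ⟨hm, hs, hi⟩
    have hl := strictPartition_tupleShape hs hi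
    have hT := isStandard_tupleTableau hs hi
    exact ⟨hl, hT.sum_eq, (hT.contentSeq_le_iff hl m).mp (by simpa using hm), hT⟩

/-- for odd `p ≥ 3` and `m = (p−1)/2`, pairs of a strict partition
of `n` with largest part at most `(p+1)/2` together with a standard tableau of
its shifted shape are in bijection, via the content sequence, with splittable
tuples in `{0,…,m}^n` with first entry `0` such that every later entry has a
neighbor (value `± 1`) among the earlier entries. -/
theorem shifted_tableau_content_bijection_mod_p (n p m : ℕ)
    (hp : p = 2 * m + 1) (h3 : 3 ≤ p) :
    Set.BijOn (fun q : List ℕ × (Fin n → ℕ × ℕ) => contentSeq q.2)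
      {q : List ℕ × (Fin n → ℕ × ℕ) |
        StrictPartition q.1 ∧ q.1.sum = n ∧ q.1.getD 0 0 ≤ (p + 1) / 2 ∧
          IsStandard (shiftedCells q.1) q.2}
      {i : Fin n → ℕ | (∀ k, i k ≤ m) ∧ Splittable i ∧
        (∀ k : Fin n, k.val = 0 → i k = 0) ∧
        ∀ k : Fin n, 1 ≤ k.val →
          (∃ a, a < k ∧ i a = i k + 1) ∨ (1 ≤ i k ∧ ∃ a, a < k ∧ i a + 1 = i k)} := by
  rw [show (p + 1) / 2 = m + 1 by omega]
  exact_mod_cast shifted_tableau_content_bijection_mod_p_general n m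
end
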